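/- arXiv:2506.10703 — 6 statements merged into one kernel-verified Lean document; each statement's English description precedes it below -/
import Mathlib

section
/- Let S ∈ ℝ^{m×p} and T ∈ ℝ^{m×q} be matrices. Define the subspaces 𝒰^⊥ := colsp(S), 𝒰 := (𝒰^⊥)^⊥, 𝒰⁻ := 𝒰 ∩ (colsp(S) + colsp(T))^⊥, and 𝒱 := colsp(T) + 𝒰⁻. If colsp(S) ∩ colsp(T) = {0}, then 𝒱 and 𝒰^⊥ are complementary subspaces, i.e., ℝ^m = 𝒱 ⊕ 𝒰^⊥; equivalently, for any matrices U and V whose orthonormal columns span 𝒰 and 𝒱 respectively, the matrix UᵀV is invertible. -/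
/-!
Since `colsp(S)^⊥` contains `(colsp(S) + colsp(T))^⊥`, the space `𝒰⁻` is just the latter, so
`ℝ^m` is the direct sum of `colsp(S)`, `colsp(T)` and `𝒰⁻`: the first two are independent by
hypothesis and the third is the orthogonal complement of their sum.
If `UᵀVx = 0`, then `Vx` is orthogonal to `𝒰`, hence lies in `𝒰^⊥ ∩ 𝒱 = {0}`, and `x = VᵀVx = 0`;
the square matrix `UᵀV` is thus injective, hence invertible.
-/

open Matrix

/-- The column space of a matrix, as a submodule of Euclidean space. -/
noncomputable def colSpan {m r : ℕ} (A : Matrix (Fin m) (Fin r) ℝ) :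
    Submodule ℝ (EuclideanSpace ℝ (Fin m)) :=
  LinearMap.range (Matrix.toEuclideanLin A)

/-- The kernel of `Uᵀ` is contained in the orthogonal complement of the column space of `U`. -/
theorem mem_colSpan_orthogonal {m r : ℕ} (U : Matrix (Fin m) (Fin r) ℝ) (w : Fin m → ℝ)
    (h : Uᵀ *ᵥ w = 0) : WithLp.toLp 2 w ∈ (colSpan U)ᗮ := by
  rw [Submodule.mem_orthogonal]
  rintro _ ⟨y, rfl⟩
  rw [EuclideanSpace.inner_eq_star_dotProduct]
  simp only [Matrix.toLpLin_apply, star_trivial]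
  rw [Matrix.dotProduct_mulVec, ← Matrix.mulVec_transpose, h, zero_dotProduct]

/-- If `colsp(S) ∩ colsp(T) = {0}`, then `𝒱` and `𝒰^⊥` are complementary subspaces of `ℝ^m`;
equivalently, for matrices `U`, `V` with orthonormal columns spanning `𝒰` and `𝒱`, the
matrix `UᵀV` is invertible. -/
theorem complementary_subspaces
    {m p q : ℕ} (S : Matrix (Fin m) (Fin p) ℝ) (T : Matrix (Fin m) (Fin q) ℝ)
    (𝒰perp 𝒰 𝒰minus 𝒱 : Submodule ℝ (EuclideanSpace ℝ (Fin m)))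
    (h𝒰perp : 𝒰perp = colSpan S)
    (h𝒰 : 𝒰 = 𝒰perpᗮ)
    (h𝒰minus : 𝒰minus = 𝒰 ⊓ (colSpan S ⊔ colSpan T)ᗮ)
    (h𝒱 : 𝒱 = colSpan T ⊔ 𝒰minus)
    (hdisj : colSpan S ⊓ colSpan T = ⊥) :
    (𝒱 ⊓ 𝒰perp = ⊥ ∧ 𝒱 ⊔ 𝒰perp = ⊤) ∧
      ∀ (r : ℕ) (U V : Matrix (Fin m) (Fin r) ℝ),
        Uᵀ * U = 1 → Vᵀ * V = 1 → colSpan U = 𝒰 → colSpan V = 𝒱 →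
          IsUnit (Uᵀ * V) := by
  subst h𝒰perp h𝒰 h𝒰minus h𝒱
  have hinf : (colSpan T ⊔ ((colSpan S)ᗮ ⊓ (colSpan S ⊔ colSpan T)ᗮ)) ⊓ colSpan S = ⊥ := by
    rw [eq_bot_iff]
    rintro x ⟨hx, hxS⟩
    obtain ⟨t, ht, u, hu, rfl⟩ := Submodule.mem_sup.1 hx
    -- `u = (t + u) - t` lies in `colsp(S) + colsp(T)` and is orthogonal to it.
    have hu' : u ∈ colSpan S ⊔ colSpan T := by
      have := sub_mem (Submodule.mem_sup_left (T := colSpan T) hxS)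
        (Submodule.mem_sup_right (S := colSpan S) ht)
      simpa using this
    have hu0 : u = 0 := by
      have : u ∈ (colSpan S ⊔ colSpan T) ⊓ (colSpan S ⊔ colSpan T)ᗮ := ⟨hu', hu.2⟩
      rwa [Submodule.inf_orthogonal_eq_bot, Submodule.mem_bot] at this
    subst hu0
    rw [add_zero] at hxS ⊢
    rw [← hdisj]
    exact ⟨hxS, ht⟩
  refine ⟨⟨hinf, ?_⟩, ?_⟩
  · rw [inf_eq_right.2 (Submodule.orthogonal_le le_sup_left), sup_right_comm,
      sup_comm (colSpan T)]
    exact Submodule.sup_orthogonal_of_hasOrthogonalProjection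
  · intro r U V _ hV hUs hVs
    rw [← Matrix.mulVec_injective_iff_isUnit]
    refine (injective_iff_map_eq_zero (Matrix.mulVecLin (Uᵀ * V))).2 fun x hx => ?_
    rw [Matrix.mulVecLin_apply, ← Matrix.mulVec_mulVec] at hx
    have h1 := mem_colSpan_orthogonal U _ hx
    rw [hUs, Submodule.orthogonal_orthogonal] at h1
    have h2 : WithLp.toLp 2 (V *ᵥ x) ∈ colSpan V :=
      ⟨WithLp.toLp 2 x, by simp [Matrix.toLpLin_apply]⟩
    rw [hVs] at h2
    have h3 : WithLp.toLp 2 (V *ᵥ x) ∈ (⊥ : Submodule ℝ (EuclideanSpace ℝ (Fin m))) :=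
      hinf ▸ ⟨h2, h1⟩
    have h4 : V *ᵥ x = 0 := by simpa using h3
    calc x = (Vᵀ * V) *ᵥ x := by rw [hV, Matrix.one_mulVec]
      _ = 0 := by rw [← Matrix.mulVec_mulVec, h4, Matrix.mulVec_zero]
end

section
/- Let W̃ ∈ ℝ^{m×m} be an invertible matrix and let S ∈ ℝ^{m×p}, T ∈ ℝ^{m×q} be matrices with colsp(S) ∩ colsp(T) = {0}. Define 𝒰^⊥ := colsp(S), 𝒰 := (𝒰^⊥)^⊥, 𝒰⁻ := 𝒰 ∩ (colsp(S) + colsp(T))^⊥, 𝒱 := colsp(T) + 𝒰⁻, let U, V be matrices whose orthonormal columns span 𝒰 and 𝒱 respectively with UᵀV invertible, and let P_obl := V (UᵀV)^{-1} Uᵀ. Define the sets of matrices C₁ := { M ∈ ℝ^{m×m} : W̃ M S = 0 } and C₂ := { M ∈ ℝ^{m×m} : W̃ M T = T }. Then { B · P_obl : B ∈ C₂ } = C₁ ∩ C₂. -/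
/-!
The oblique projection `P = V (UᵀV)⁻¹ Uᵀ` fixes every column of `V`, hence `P T = T`, because
`colSpan T ≤ 𝒱`; it kills the columns of `S`, because `UᵀS = 0`. So `B ↦ B P` maps `C₂` into
`C₁ ∩ C₂`. Conversely `Uᵀ (1 - P) = 0`, so the columns of `1 - P` are orthogonal to `𝒰`, that is,
they lie in `(colSpan S)ᗮᗮ = colSpan S`. Hence `1 - P = S Y` for some `Y`, and any `M` with
`M S = 0` satisfies `M P = M`: an element of `C₁ ∩ C₂` is its own preimage. The matrix `W̃` enters
only in that it can be cancelled from `W̃ M S = 0`.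
-/

open Matrix

theorem exists_eq_mul_of_colSpan_le {m r s : ℕ} {A : Matrix (Fin m) (Fin r) ℝ}
    {B : Matrix (Fin m) (Fin s) ℝ} (h : colSpan A ≤ colSpan B) :
    ∃ X : Matrix (Fin s) (Fin r) ℝ, A = B * X := by
  have key : ∀ j, ∃ x : EuclideanSpace ℝ (Fin s),
      Matrix.toEuclideanLin B x = Matrix.toEuclideanLin A (EuclideanSpace.single j 1) :=
    fun j => h ⟨_, rfl⟩
  choose x hx using key
  refine ⟨Matrix.of fun k j => x j k, ?_⟩
  ext i j
  have := congrArg (fun v : EuclideanSpace ℝ (Fin m) => v i) (hx j)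
  simpa [Matrix.toLpLin_apply, Matrix.mulVec, dotProduct, Matrix.mul_apply] using this.symm

/-- Orthogonality of column spaces is the vanishing of all pairwise inner products of columns. -/
theorem colSpan_le_orthogonal_iff {m r s : ℕ} {A : Matrix (Fin m) (Fin r) ℝ}
    {B : Matrix (Fin m) (Fin s) ℝ} : colSpan A ≤ (colSpan B)ᗮ ↔ Bᵀ * A = 0 := by
  have inner_eq : ∀ (x : EuclideanSpace ℝ (Fin s)) (y : EuclideanSpace ℝ (Fin r)),
      inner ℝ (Matrix.toEuclideanLin B x) (Matrix.toEuclideanLin A y)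
        = x.ofLp ⬝ᵥ (Bᵀ * A) *ᵥ y.ofLp := by
    intro x y
    rw [EuclideanSpace.inner_eq_star_dotProduct, dotProduct_comm]
    simp [Matrix.toLpLin_apply, ← Matrix.mulVec_mulVec, Matrix.dotProduct_mulVec,
      Matrix.vecMul_transpose]
  constructor
  · intro h
    ext i j
    have h0 := (Submodule.mem_orthogonal _ _).1
      (h ⟨EuclideanSpace.single j 1, rfl⟩) _ ⟨EuclideanSpace.single i 1, rfl⟩
    rw [inner_eq] at h0
    simpa using h0
  · rintro h _ ⟨y, rfl⟩
    rw [Submodule.mem_orthogonal]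
    rintro _ ⟨x, rfl⟩
    rw [inner_eq, h]
    simp

/-- With `C₁ = {M : W̃ M S = 0}` and `C₂ = {M : W̃ M T = T}`, one has
`{B ⬝ P_obl : B ∈ C₂} = C₁ ∩ C₂`, where `P_obl = V (UᵀV)⁻¹ Uᵀ` is the oblique projection
onto `𝒱` along `𝒰^⊥`. -/
theorem set_equivalence_oblique
    {m p q r : ℕ}
    (Wt : Matrix (Fin m) (Fin m) ℝ) (hWt : IsUnit Wt)
    (S : Matrix (Fin m) (Fin p) ℝ) (T : Matrix (Fin m) (Fin q) ℝ)
    (hdisj : colSpan S ⊓ colSpan T = ⊥)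
    (𝒰perp 𝒰 𝒰minus 𝒱 : Submodule ℝ (EuclideanSpace ℝ (Fin m)))
    (h𝒰perp : 𝒰perp = colSpan S)
    (h𝒰 : 𝒰 = 𝒰perpᗮ)
    (h𝒰minus : 𝒰minus = 𝒰 ⊓ (colSpan S ⊔ colSpan T)ᗮ)
    (h𝒱 : 𝒱 = colSpan T ⊔ 𝒰minus)
    (U V : Matrix (Fin m) (Fin r) ℝ)
    (hU1 : Uᵀ * U = 1) (hV1 : Vᵀ * V = 1)
    (hUspan : colSpan U = 𝒰) (hVspan : colSpan V = 𝒱)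
    (hinv : IsUnit (Uᵀ * V))
    (Pobl : Matrix (Fin m) (Fin m) ℝ) (hPobl : Pobl = V * (Uᵀ * V)⁻¹ * Uᵀ)
    (C₁ C₂ : Set (Matrix (Fin m) (Fin m) ℝ))
    (hC₁ : C₁ = {M | Wt * M * S = 0})
    (hC₂ : C₂ = {M | Wt * M * T = T}) :
    (fun B => B * Pobl) '' C₂ = C₁ ∩ C₂ := by
  have hUS : Uᵀ * S = 0 := by
    rw [← colSpan_le_orthogonal_iff, hUspan, h𝒰, h𝒰perp]
    exact Submodule.le_orthogonal_orthogonal _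
  obtain ⟨X, hX⟩ : ∃ X : Matrix (Fin r) (Fin q) ℝ, T = V * X :=
    exists_eq_mul_of_colSpan_le (by rw [hVspan, h𝒱]; exact le_sup_left)
  have hdet : IsUnit (Uᵀ * V).det := (Matrix.isUnit_iff_isUnit_det _).1 hinv
  have hPS : Pobl * S = 0 := by rw [hPobl, Matrix.mul_assoc, hUS, Matrix.mul_zero]
  have hPV : Pobl * V = V := by
    rw [hPobl, Matrix.mul_assoc, Matrix.mul_assoc, Matrix.nonsing_inv_mul _ hdet, Matrix.mul_one]
  have hPT : Pobl * T = T := by rw [hX, ← Matrix.mul_assoc, hPV]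
  have hUP : Uᵀ * (1 - Pobl) = 0 := by
    rw [Matrix.mul_sub, hPobl, ← Matrix.mul_assoc, ← Matrix.mul_assoc,
      Matrix.mul_nonsing_inv _ hdet, Matrix.one_mul, Matrix.mul_one, sub_self]
  obtain ⟨Y, hY⟩ : ∃ Y : Matrix (Fin p) (Fin m) ℝ, 1 - Pobl = S * Y := by
    apply exists_eq_mul_of_colSpan_le
    have h := colSpan_le_orthogonal_iff.2 hUP
    rwa [hUspan, h𝒰, h𝒰perp, Submodule.orthogonal_orthogonal] at h
  subst hC₁ hC₂
  ext M
  constructor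
  · rintro ⟨B, hB, rfl⟩
    have hB' : Wt * B * T = T := hB
    constructor
    · change Wt * (B * Pobl) * S = 0
      rw [← Matrix.mul_assoc, Matrix.mul_assoc, hPS, Matrix.mul_zero]
    · change Wt * (B * Pobl) * T = T
      rw [← Matrix.mul_assoc, Matrix.mul_assoc, hPT, hB']
  · rintro ⟨h1, h2⟩
    refine ⟨M, h2, ?_⟩
    have h1' : Wt * (M * S) = 0 := by rw [← Matrix.mul_assoc]; exact h1
    have hMS : M * S = 0 := by
      have hW : IsUnit Wt.det := (Matrix.isUnit_iff_isUnit_det _).1 hWt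
      rw [← Matrix.nonsing_inv_mul_cancel_left Wt (M * S) hW, h1', Matrix.mul_zero]
    have hM : M * (1 - Pobl) = 0 := by rw [hY, ← Matrix.mul_assoc, hMS, Matrix.zero_mul]
    rw [Matrix.mul_sub, Matrix.mul_one, sub_eq_zero] at hM
    exact hM.symm
end

section
/- Let P_A, P_B ∈ ℝ^{d×d} be idempotent matrices with the same kernel 𝒰, with ranges 𝒜 := Range(P_A) and ℬ := Range(P_B). Let X ∈ ℝ^{n×d} be a design matrix and Y an arbitrary label vector, and set X_𝒜 := X P_Aᵀ and X_ℬ := X P_Bᵀ (i.e., each row x_kᵀ of X is replaced by (P_A x_k)ᵀ, respectively (P_B x_k)ᵀ). Let L be a loss function of the prediction vector Xθ and Y, and suppose θ*_𝒜 is the unique minimizer over θ ∈ 𝒜 of θ ↦ L(X_𝒜 θ, Y) and θ*_ℬ is the unique minimizer over θ ∈ ℬ of θ ↦ L(X_ℬ θ, Y). Then the two fitted models make identical predictions: (P_A x)ᵀ θ*_𝒜 = (P_B x)ᵀ θ*_ℬ for every x ∈ ℝ^d. -/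
/-!
Since `PA` and `PB` are idempotent with the same kernel, `PA * PB = PA` and `PB * PA = PB`, so the
transposes have the same range. As `Pᵀ * P` and `Pᵀ` have the same range, every vector of that common
range is `PAᵀ θ` with `θ` in the range of `PA`, and likewise for `PB`: both constrained problems
minimize `L (X w) Y` over the same set of effective parameters `w = Pᵀ θ`. Uniqueness of the
minimizer then forces `PAᵀ θA = PBᵀ θB`, which is the equality of predictions.
-/

open Matrix

theorem mul_eq_left_of_ker_eq {d : ℕ} {P Q : Matrix (Fin d) (Fin d) ℝ} (hQ : Q * Q = Q)
    (hker : LinearMap.ker P.mulVecLin = LinearMap.ker Q.mulVecLin) : P * Q = P := by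
  apply Matrix.ext_of_mulVec_single
  intro i
  -- `Q v - v` lies in the kernel of `Q`, hence in that of `P`.
  have h : Q *ᵥ Pi.single i 1 - Pi.single i 1 ∈ LinearMap.ker P.mulVecLin := by
    rw [hker, LinearMap.mem_ker, mulVecLin_apply, mulVec_sub, mulVec_mulVec, hQ, sub_self]
  rw [LinearMap.mem_ker, mulVecLin_apply, mulVec_sub, mulVec_mulVec, sub_eq_zero] at h
  exact h

/-- `Pᵀ` already attains its whole range on the range of `P`, because `Pᵀ * P` and `Pᵀ` have the
same rank. -/
theorem exists_mem_range_transpose_mulVec_eq {d : ℕ} (P : Matrix (Fin d) (Fin d) ℝ)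
    (v : Fin d → ℝ) : ∃ θ ∈ LinearMap.range P.mulVecLin, Pᵀ *ᵥ θ = Pᵀ *ᵥ v := by
  have hle : LinearMap.range (Pᵀ * P).mulVecLin ≤ LinearMap.range Pᵀ.mulVecLin := by
    rw [mulVecLin_mul]
    exact LinearMap.range_comp_le_range _ _
  have heq := Submodule.eq_of_le_of_finrank_eq hle
    ((rank_transpose_mul_self P).trans (rank_transpose P).symm)
  have hv : Pᵀ *ᵥ v ∈ LinearMap.range (Pᵀ * P).mulVecLin := by
    rw [heq]
    exact ⟨v, rfl⟩
  obtain ⟨u, hu⟩ := hv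
  refine ⟨P *ᵥ u, ⟨u, rfl⟩, ?_⟩
  rw [mulVec_mulVec]
  exact hu

/-- Every effective parameter `Pᵀ θ` is also `Qᵀ φ` for some `φ` in the range of `Q`, when `Q` is a
projection with the same kernel as `P`. -/
theorem exists_mem_range_transpose_mulVec_eq_of_ker_eq {d : ℕ} {P Q : Matrix (Fin d) (Fin d) ℝ}
    (hQ : Q * Q = Q) (hker : LinearMap.ker P.mulVecLin = LinearMap.ker Q.mulVecLin)
    (θ : Fin d → ℝ) : ∃ φ ∈ LinearMap.range Q.mulVecLin, Qᵀ *ᵥ φ = Pᵀ *ᵥ θ := by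
  obtain ⟨φ, hφ, h⟩ := exists_mem_range_transpose_mulVec_eq Q (Pᵀ *ᵥ θ)
  refine ⟨φ, hφ, ?_⟩
  rw [h, mulVec_mulVec, ← transpose_mul, mul_eq_left_of_ker_eq hQ hker]

/-- Equivalent predictions after oblique re-training: if `P_A` and `P_B` are projections with
the same kernel, and `θ*_𝒜`, `θ*_ℬ` are the unique minimizers of the loss
`θ ↦ L(X Pᵀ θ, Y)` over the respective ranges, then the two fitted models give identical
predictions: `(P_A x)ᵀ θ*_𝒜 = (P_B x)ᵀ θ*_ℬ` for every `x`. -/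
theorem equivalent_predictions_after_retraining
    {d n : ℕ} (PA PB : Matrix (Fin d) (Fin d) ℝ)
    (hPA : PA * PA = PA) (hPB : PB * PB = PB)
    (hker : LinearMap.ker PA.mulVecLin = LinearMap.ker PB.mulVecLin)
    (X : Matrix (Fin n) (Fin d) ℝ) {𝒴 : Type*} (Y : 𝒴)
    (L : (Fin n → ℝ) → 𝒴 → ℝ)
    (θA θB : Fin d → ℝ)
    (hθAmem : θA ∈ LinearMap.range PA.mulVecLin)
    (hθAmin : ∀ θ ∈ LinearMap.range PA.mulVecLin,
      L ((X * PAᵀ).mulVec θA) Y ≤ L ((X * PAᵀ).mulVec θ) Y)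
    (hθAuniq : ∀ θ ∈ LinearMap.range PA.mulVecLin,
      L ((X * PAᵀ).mulVec θ) Y ≤ L ((X * PAᵀ).mulVec θA) Y → θ = θA)
    (hθBmem : θB ∈ LinearMap.range PB.mulVecLin)
    (hθBmin : ∀ θ ∈ LinearMap.range PB.mulVecLin,
      L ((X * PBᵀ).mulVec θB) Y ≤ L ((X * PBᵀ).mulVec θ) Y)
    (hθBuniq : ∀ θ ∈ LinearMap.range PB.mulVecLin,
      L ((X * PBᵀ).mulVec θ) Y ≤ L ((X * PBᵀ).mulVec θB) Y → θ = θB) :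
    ∀ x : Fin d → ℝ, PA.mulVec x ⬝ᵥ θA = PB.mulVec x ⬝ᵥ θB := by
  obtain ⟨φ, hφ, hφA⟩ := exists_mem_range_transpose_mulVec_eq_of_ker_eq hPB hker θA
  obtain ⟨ψ, hψ, hψB⟩ := exists_mem_range_transpose_mulVec_eq_of_ker_eq hPA hker.symm θB
  -- `φ` has the same loss as `θA`, and `ψ` the same as `θB`, so `φ` also minimizes over `range PB`.
  have hφθ : φ = θB := by
    apply hθBuniq φ hφ
    have h := hθAmin ψ hψ
    simp only [← mulVec_mulVec] at h ⊢
    rwa [hφA, ← hψB]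
  intro x
  have key : PBᵀ *ᵥ θB = PAᵀ *ᵥ θA := hφθ ▸ hφA
  rw [dotProduct_comm, dotProduct_comm (PB *ᵥ x), dotProduct_mulVec, dotProduct_mulVec,
    ← mulVec_transpose, ← mulVec_transpose, key]
end

section
/- Let x ∈ ℝ^d be a random vector with the centered multivariate Gaussian distribution N(0, Σ), where Σ ∈ ℝ^{d×d} is positive definite, and let β ∈ ℝ^d. Then, with σ(s) := 1/(1 + e^{−s}) the logistic sigmoid, E[x · σ(xᵀβ)] = C · Σ β, where C := E[σ(xᵀβ)(1 − σ(xᵀβ))] > 0. Consequently, if y is a {0,1}-valued random variable with E[y | x] = σ(xᵀβ) almost surely, then the cross-covariance Σ_{x,y} := E[x y] satisfies Σ_{x,y} = C · Σ β, and hence β = (1/C) · Σ^{-1} Σ_{x,y}. -/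
/-!
Write `S = βᵀx` and `T = xᵢ`. The pair `(T, S)` is jointly Gaussian, because every linear
combination of its entries is a linear functional of `x`. If `β ≠ 0` then `v = Var S > 0`, and the
residual `T - (cov[T, S] / v) S` is uncorrelated with `S`, hence independent of it; being centered,
it contributes nothing to `E[T σ(S)]`. What remains is `(cov[T, S] / v) E[S σ(S)]`, and the
one-dimensional Stein identity `E[S σ(S)] = v E[σ'(S)]`, an integration by parts against the
Gaussian density, gives `E[T σ(S)] = cov[T, S] E[σ'(S)]` with `cov[T, S] = (Σ β)ᵢ`. If `β = 0`,
both sides vanish. These steps are `integral_id_mul_gaussianReal`, `integral_mul_of_hasGaussianLaw`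
and `covariance_dotProduct`.

The statement about `y` follows from the tower property and the pull-out property of conditional
expectation, `E[xᵢ y] = E[xᵢ E[y | x]] = E[xᵢ σ(S)]`, and the formula for `β` from inverting `Σ`.
-/

open MeasureTheory ProbabilityTheory Matrix

/-- One-dimensional Stein identity, by integration by parts against the Gaussian density `p`,
which satisfies `p' s = -(s / v) * p s`. -/
lemma integral_id_mul_gaussianReal {v : NNReal} (hv : v ≠ 0) {g g' : ℝ → ℝ}
    (hg : ∀ s, HasDerivAt g (g' s) s) (hgc' : Continuous g')
    {K K' : ℝ} (hK : ∀ s, |g s| ≤ K) (hK' : ∀ s, |g' s| ≤ K') :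
    ∫ s, s * g s ∂(gaussianReal 0 v) = v * ∫ s, g' s ∂(gaussianReal 0 v) := by
  have hgc : Continuous g := continuous_iff_continuousAt.2 fun s => (hg s).continuousAt
  have hv' : (v : ℝ) ≠ 0 := by exact_mod_cast hv
  have hp : ∀ s, HasDerivAt (gaussianPDFReal 0 v) (-(s / v) * gaussianPDFReal 0 v s) s := by
    intro s
    have h1 : HasDerivAt (fun s : ℝ => -(s - 0) ^ 2 / (2 * (v : ℝ))) (-(s / v)) s := by
      have := ((((hasDerivAt_id s).sub_const 0).pow 2).neg).div_const (2 * (v : ℝ))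
      refine this.congr_deriv ?_
      simp only [id, sub_zero]
      field_simp
      simp
    have := (h1.exp).const_mul (√(2 * Real.pi * v))⁻¹
    rw [gaussianPDFReal_def]
    refine this.congr_deriv ?_
    ring
  -- integrability against the Gaussian law is integrability of the product with the density
  have htr : ∀ f : ℝ → ℝ, Integrable f (gaussianReal 0 v) →
      Integrable (fun s => gaussianPDFReal 0 v s * f s) := by
    intro f hf
    rw [gaussianReal_of_var_ne_zero _ hv,
      integrable_withDensity_iff_integrable_smul' (measurable_gaussianPDF 0 v)
        (Filter.Eventually.of_forall fun _ => gaussianPDF_lt_top)] at hf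
    simpa [toReal_gaussianPDF] using hf
  have ig : Integrable g (gaussianReal 0 v) :=
    Integrable.of_bound hgc.aestronglyMeasurable K (Filter.Eventually.of_forall hK)
  have ig' : Integrable g' (gaussianReal 0 v) :=
    Integrable.of_bound hgc'.aestronglyMeasurable K' (Filter.Eventually.of_forall hK')
  have iid : Integrable (fun s : ℝ => s) (gaussianReal 0 v) :=
    (memLp_id_gaussianReal 1).integrable le_rfl
  have isg : Integrable (fun s => s * g s) (gaussianReal 0 v) :=
    iid.mul_bdd hgc.aestronglyMeasurable (Filter.Eventually.of_forall hK)
  have key := integral_mul_deriv_eq_deriv_mul_of_integrable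
    (u := gaussianPDFReal 0 v) (v := g) (fun s _ => hp s) (fun s _ => hg s)
    (htr g' ig')
    (by
      refine ((htr _ isg).const_mul (-(v : ℝ)⁻¹)).congr (Filter.Eventually.of_forall fun s => ?_)
      simp only [Pi.mul_apply]
      field_simp)
    (htr g ig)
  rw [integral_gaussianReal_eq_integral_smul hv, integral_gaussianReal_eq_integral_smul hv]
  simp only [smul_eq_mul]
  rw [key, ← integral_neg, ← integral_const_mul]
  refine integral_congr_ae (Filter.Eventually.of_forall fun s => ?_)
  simp only
  field_simp

/-- Stein identity for a centered jointly Gaussian pair: `T - (cov[T, S] / v) S` is uncorrelated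
with `S`, hence independent of it, so only the multiple of `S` contributes to `E[T g(S)]`. -/
lemma integral_mul_of_hasGaussianLaw {Ω : Type*} {mΩ : MeasurableSpace Ω} {P : Measure Ω}
    {T S : Ω → ℝ} (hTS : HasGaussianLaw (fun ω => (T ω, S ω)) P)
    {v : NNReal} (hv : v ≠ 0) (hS : P.map S = gaussianReal 0 v) (hT0 : ∫ ω, T ω ∂P = 0)
    {g g' : ℝ → ℝ} (hg : ∀ s, HasDerivAt g (g' s) s) (hgc' : Continuous g')
    {K K' : ℝ} (hK : ∀ s, |g s| ≤ K) (hK' : ∀ s, |g' s| ≤ K') :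
    ∫ ω, T ω * g (S ω) ∂P = cov[T, S; P] * ∫ ω, g' (S ω) ∂P := by
  have := hTS.isProbabilityMeasure
  have hgc : Continuous g := continuous_iff_continuousAt.2 fun s => (hg s).continuousAt
  have hv' : (v : ℝ) ≠ 0 := by exact_mod_cast hv
  have hSm : AEMeasurable S P := hTS.snd.aemeasurable
  have hVar : Var[S; P] = v := by
    rw [← variance_id_gaussianReal (μ := 0) (v := v), ← hS, variance_id_map hSm]
  have hS0 : ∫ ω, S ω ∂P = 0 := by
    have : ∫ s, s ∂(P.map S) = 0 := by rw [hS, integral_id_gaussianReal]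
    rwa [integral_map hSm (by fun_prop)] at this
  set c : ℝ := cov[T, S; P] / v with hc
  set Z : Ω → ℝ := fun ω => T ω - c * S ω with hZ
  have hZS : HasGaussianLaw (fun ω => (Z ω, S ω)) P := by
    have := hTS.map_fun
      ((ContinuousLinearMap.fst ℝ ℝ ℝ - c • ContinuousLinearMap.snd ℝ ℝ ℝ).prod
        (ContinuousLinearMap.snd ℝ ℝ ℝ))
    simpa [hZ] using this
  have hcov : cov[Z, S; P] = 0 := by
    have h1 : cov[Z, S; P] = cov[T, S; P] - cov[fun ω => c * S ω, S; P] :=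
      covariance_fun_sub_left hTS.fst.memLp_two (hTS.snd.memLp_two.const_mul c)
        hTS.snd.memLp_two
    rw [h1, covariance_const_mul_left, covariance_self hSm, hVar, hc]
    field_simp
    ring
  have hind : IndepFun Z S P := hZS.indepFun_of_covariance_eq_zero hcov
  have hZ0 : ∫ ω, Z ω ∂P = 0 := by
    rw [hZ, integral_sub hTS.fst.integrable (hTS.snd.integrable.const_mul c),
      integral_const_mul, hT0, hS0]
    simp
  have hgS : AEStronglyMeasurable (fun ω => g (S ω)) P :=
    (hgc.measurable.comp_aemeasurable hSm).aestronglyMeasurable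
  have hprod : ∫ ω, Z ω * g (S ω) ∂P = 0 := by
    have := (hind.comp measurable_id hgc.measurable).integral_fun_mul_eq_mul_integral
      (hZS.fst.aemeasurable.aestronglyMeasurable) hgS
    simp only [Function.comp_def, id] at this
    rw [this, hZ0, zero_mul]
  have iZ : Integrable (fun ω => Z ω * g (S ω)) P :=
    hZS.fst.integrable.mul_bdd hgS (Filter.Eventually.of_forall fun ω => hK _)
  have iS : Integrable (fun ω => S ω * g (S ω)) P :=
    hTS.snd.integrable.mul_bdd hgS (Filter.Eventually.of_forall fun ω => hK _)
  have hone := integral_id_mul_gaussianReal hv hg hgc' hK hK'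
  rw [← hS, integral_map hSm (by fun_prop), integral_map hSm (by fun_prop)] at hone
  calc ∫ ω, T ω * g (S ω) ∂P = ∫ ω, (Z ω * g (S ω) + c * (S ω * g (S ω))) ∂P := by
        congr 1; ext ω; simp only [hZ]; ring
    _ = cov[T, S; P] * ∫ ω, g' (S ω) ∂P := by
        rw [integral_add iZ (iS.const_mul c), integral_const_mul, hprod, hone, hc]
        field_simp
        ring

section Linear

variable {Ω : Type*} {mΩ : MeasurableSpace Ω} {P : Measure Ω} {d : ℕ} {x : Ω → Fin d → ℝ}
  {Sig : Matrix (Fin d) (Fin d) ℝ}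

lemma measurable_dotProduct (hxm : Measurable x) (a : Fin d → ℝ) :
    Measurable fun ω => a ⬝ᵥ x ω := by
  simp only [dotProduct]
  fun_prop

lemma hasGaussianLaw_dotProduct_prod (hxm : Measurable x)
    (hgauss : ∀ a : Fin d → ℝ, P.map (fun ω => a ⬝ᵥ x ω) =
      gaussianReal 0 (Real.toNNReal (a ⬝ᵥ Sig.mulVec a))) (a b : Fin d → ℝ) :
    HasGaussianLaw (fun ω => (a ⬝ᵥ x ω, b ⬝ᵥ x ω)) P where
  isGaussian_map := by
    have ha := measurable_dotProduct hxm a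
    have hb := measurable_dotProduct hxm b
    refine isGaussian_of_map_eq_gaussianReal fun L => ?_
    -- `L (a ⬝ᵥ x, b ⬝ᵥ x)` is again a linear functional of `x`
    have h := hgauss (L (1, 0) • a + L (0, 1) • b)
    refine ⟨0, _, Eq.trans ?_ h⟩
    rw [Measure.map_map (by fun_prop) (by fun_prop)]
    congr 1
    ext ω
    have : ((a ⬝ᵥ x ω, b ⬝ᵥ x ω) : ℝ × ℝ)
        = (a ⬝ᵥ x ω) • ((1, 0) : ℝ × ℝ) + (b ⬝ᵥ x ω) • ((0, 1) : ℝ × ℝ) := by simp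
    simp only [Function.comp_apply]
    rw [this, map_add, map_smul, map_smul, add_dotProduct, smul_dotProduct, smul_dotProduct]
    simp only [smul_eq_mul]
    ring

/-- Covariances of linear functionals of `x`, recovered from their variances by polarization. -/
lemma covariance_dotProduct (hxm : Measurable x) (hSig : Sig.PosDef)
    (hgauss : ∀ a : Fin d → ℝ, P.map (fun ω => a ⬝ᵥ x ω) =
      gaussianReal 0 (Real.toNNReal (a ⬝ᵥ Sig.mulVec a))) (a b : Fin d → ℝ) :
    cov[fun ω => a ⬝ᵥ x ω, fun ω => b ⬝ᵥ x ω; P] = a ⬝ᵥ Sig.mulVec b := by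
  have hab := hasGaussianLaw_dotProduct_prod hxm hgauss a b
  have := hab.isProbabilityMeasure
  have hvar : ∀ a : Fin d → ℝ, Var[fun ω => a ⬝ᵥ x ω; P] = a ⬝ᵥ Sig.mulVec a := by
    intro a
    have hnn : 0 ≤ a ⬝ᵥ Sig.mulVec a := by
      simpa using hSig.posSemidef.dotProduct_mulVec_nonneg a
    rw [← variance_id_map (measurable_dotProduct hxm a).aemeasurable, hgauss,
      variance_id_gaussianReal, Real.coe_toNNReal _ hnn]
  have hadd := variance_fun_add hab.fst.memLp_two hab.snd.memLp_two
  have hsymm : b ⬝ᵥ Sig.mulVec a = a ⬝ᵥ Sig.mulVec b := by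
    have hT : Sigᵀ = Sig := by
      rw [← conjTranspose_eq_transpose_of_trivial]; exact hSig.isHermitian
    rw [dotProduct_comm, ← vecMul_transpose, hT, ← dotProduct_mulVec]
  simp only [← add_dotProduct] at hadd
  rw [hvar, hvar, hvar, mulVec_add, add_dotProduct, dotProduct_add, dotProduct_add, hsymm] at hadd
  linarith

end Linear

/-- Stein's identity for the logistic sigmoid under a centered Gaussian `x ~ N(0, Σ)`
(characterized by all linear functionals being Gaussian): `E[x σ(xᵀβ)] = C Σ β` with
`C = E[σ(xᵀβ)(1 − σ(xᵀβ))] > 0`; consequently, for a well-specified logistic response `y`,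
the cross-covariance `Σ_{x,y} = E[x y]` equals `C Σ β` and `β = (1/C) Σ⁻¹ Σ_{x,y}`. -/
theorem stein_logistic_cross_covariance
    {Ω : Type*} [MeasureSpace Ω] [IsProbabilityMeasure (ℙ : Measure Ω)]
    {d : ℕ} (x : Ω → Fin d → ℝ) (hxm : Measurable x)
    (Sig : Matrix (Fin d) (Fin d) ℝ) (hSig : Sig.PosDef)
    (hgauss : ∀ a : Fin d → ℝ,
      Measure.map (fun ω => a ⬝ᵥ x ω) (ℙ : Measure Ω) =
        gaussianReal 0 (Real.toNNReal (a ⬝ᵥ Sig.mulVec a)))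
    (β : Fin d → ℝ)
    (σ : ℝ → ℝ) (hσ : σ = fun s => 1 / (1 + Real.exp (-s)))
    (C : ℝ) (hC : C = ∫ ω, σ (x ω ⬝ᵥ β) * (1 - σ (x ω ⬝ᵥ β))) :
    (∀ i, (∫ ω, x ω i * σ (x ω ⬝ᵥ β)) = C * Sig.mulVec β i) ∧
      0 < C ∧
      ∀ y : Ω → ℝ, Measurable y → (∀ ω, y ω = 0 ∨ y ω = 1) →
        ((ℙ : Measure Ω)[y|MeasurableSpace.comap x inferInstance]
          =ᵐ[(ℙ : Measure Ω)] fun ω => σ (x ω ⬝ᵥ β)) →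
        (∀ i, (∫ ω, x ω i * y ω) = C * Sig.mulVec β i) ∧
          β = (1 / C) • Sig⁻¹.mulVec (fun i => ∫ ω, x ω i * y ω) := by
  have hσ' : σ = Real.sigmoid := by
    rw [hσ]; ext s; simp [Real.sigmoid_def]
  subst hσ'
  clear hσ
  simp only [dotProduct_comm _ β] at hC ⊢
  have hb0 : ∀ s, 0 < Real.sigmoid s * (1 - Real.sigmoid s) := fun s =>
    mul_pos (Real.sigmoid_pos s) (sub_pos.2 (Real.sigmoid_lt_one s))
  have hK : ∀ s, |Real.sigmoid s| ≤ 1 := fun s => by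
    rw [abs_of_pos (Real.sigmoid_pos s)]; exact Real.sigmoid_le_one s
  have hK' : ∀ s, |Real.sigmoid s * (1 - Real.sigmoid s)| ≤ 1 := fun s => by
    rw [abs_of_pos (hb0 s)]
    nlinarith [Real.sigmoid_pos s, Real.sigmoid_lt_one s]
  have hsc : Continuous Real.sigmoid := continuous_sigmoid
  have hSm := measurable_dotProduct hxm β
  have hcoord : ∀ i, (fun ω => x ω i) = fun ω => Pi.single i (1 : ℝ) ⬝ᵥ x ω := fun i => by
    ext ω; simp
  have hxi : ∀ i, Integrable (fun ω => x ω i) := fun i => by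
    rw [hcoord]
    exact (hasGaussianLaw_dotProduct_prod hxm hgauss (Pi.single i 1) β).fst.integrable
  have hmean : ∀ i, ∫ ω, x ω i = 0 := fun i => by
    have : ∫ s, s ∂(Measure.map (fun ω => Pi.single i (1 : ℝ) ⬝ᵥ x ω) ℙ) = 0 := by
      rw [hgauss, integral_id_gaussianReal]
    rw [integral_map (measurable_dotProduct hxm _).aemeasurable (by fun_prop)] at this
    simpa using this
  have hCpos : 0 < C := by
    have hint : Integrable (fun ω => Real.sigmoid (β ⬝ᵥ x ω) * (1 - Real.sigmoid (β ⬝ᵥ x ω))) :=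
      Integrable.of_bound (by
        exact ((hsc.mul (continuous_const.sub hsc)).measurable.comp hSm).aestronglyMeasurable)
        1 (Filter.Eventually.of_forall fun ω => hK' _)
    rw [hC, integral_pos_iff_support_of_nonneg (fun ω => (hb0 _).le) hint]
    have : Function.support
        (fun ω => Real.sigmoid (β ⬝ᵥ x ω) * (1 - Real.sigmoid (β ⬝ᵥ x ω))) = Set.univ := by
      ext ω; simpa using (hb0 (β ⬝ᵥ x ω)).ne'
    rw [this]
    simp
  have hstein : ∀ i, (∫ ω, x ω i * Real.sigmoid (β ⬝ᵥ x ω)) = C * Sig.mulVec β i := by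
    intro i
    rcases eq_or_ne β 0 with rfl | hβ
    · -- the law of `β ⬝ᵥ x` degenerates to a point mass, and both sides vanish
      simp [integral_mul_const, hmean]
    · have hpos : 0 < β ⬝ᵥ Sig.mulVec β := by
        simpa using hSig.dotProduct_mulVec_pos hβ
      have h := integral_mul_of_hasGaussianLaw
        (hasGaussianLaw_dotProduct_prod hxm hgauss (Pi.single i 1) β)
        (Real.toNNReal_pos.2 hpos).ne' (hgauss β) (by simpa using hmean i)
        Real.hasDerivAt_sigmoid (hsc.mul (continuous_const.sub hsc)) hK hK'
      rw [covariance_dotProduct hxm hSig hgauss, ← hC] at h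
      simpa [mul_comm C] using h
  refine ⟨hstein, hCpos, fun y hym hy hcond => ?_⟩
  have hyb : ∀ ω, ‖y ω‖ ≤ 1 := fun ω => by rcases hy ω with h | h <;> simp [h]
  have hyi : Integrable y :=
    Integrable.of_bound hym.aestronglyMeasurable 1 (Filter.Eventually.of_forall hyb)
  have hcross : ∀ i, (∫ ω, x ω i * y ω) = C * Sig.mulVec β i := by
    intro i
    have hxy : Integrable ((fun ω => x ω i) * y) :=
      (hxi i).mul_bdd hym.aestronglyMeasurable (Filter.Eventually.of_forall hyb)
    have hxs : StronglyMeasurable[MeasurableSpace.comap x inferInstance] (fun ω => x ω i) :=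
      ((measurable_pi_apply i).comp (comap_measurable x)).stronglyMeasurable
    have hpull := condExp_mul_of_stronglyMeasurable_left hxs hxy hyi
    rw [← hstein i]
    calc ∫ ω, x ω i * y ω
        = ∫ ω, ((ℙ : Measure Ω)[(fun ω => x ω i) * y|MeasurableSpace.comap x inferInstance]) ω :=
          (integral_condExp hxm.comap_le).symm
      _ = ∫ ω, x ω i * Real.sigmoid (β ⬝ᵥ x ω) := by
          refine integral_congr_ae ?_
          filter_upwards [hpull, hcond] with ω h1 h2
          rw [h1, Pi.mul_apply, h2]
  refine ⟨hcross, ?_⟩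
  have hv : (fun i => ∫ ω, x ω i * y ω) = C • Sig.mulVec β := by
    ext i; simp [hcross i]
  have hdet : IsUnit Sig.det := hSig.det_pos.ne'.isUnit
  rw [hv, mulVec_smul, mulVec_mulVec, nonsing_inv_mul _ hdet, one_mulVec, smul_smul,
    one_div_mul_cancel hCpos.ne', one_smul]
end

section
/- Let x ∈ ℝ^d be a random vector with the centered multivariate Gaussian distribution N(0, Σ), Σ positive definite, and let y be a {0,1}-valued random variable with E[y | x] = σ(xᵀβ) almost surely, for a fixed β ∈ ℝ^d, where σ(s) := 1/(1 + e^{−s}). Let P_z ∈ ℝ^{d×d} be an orthogonal projection matrix (P_z² = P_z = P_zᵀ) and set Q_LEACE with Q_LEACEᵀ := I_d − P_z. Then the excess logistic risk satisfies 0 ≤ Δℓ(Q_LEACE) ≤ (1/8) · βᵀ P_z Σ P_z β, where Δℓ(Q) := E[ℓ(xᵀQᵀβ, y)] − E[ℓ(xᵀβ, y)] and ℓ(s, y) := log(1 + e^{s}) − y·s. -/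
/-!
Write `A s = log (1 + eˢ)`, so that `A' = sigmoid` and `0 ≤ A'' ≤ 1/4`. Since `Qᵀ β = β - P_z β`,
the erased logit is `s - δ` with `s = x ⬝ β` and `δ = x ⬝ P_z β`, and the excess loss at a point is
`A (s - δ) - A s + y δ`. As `δ` is a function of `x`, conditioning on `x` replaces `y` by
`sigmoid s` under the integral (`integral_mul_eq_of_condExp`), which leaves the Bregman divergence
of `A`. Taylor's bounds (`softplus_tangent_le`, `softplus_le_quadratic`) place it between `0` and
`δ² / 8`, and the second moment of the Gaussian variable `δ` is `βᵀ P_z Σ P_z β`.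

Of the Gaussian law, only square integrability and the second moments of linear functionals enter.
-/

open MeasureTheory ProbabilityTheory Matrix

/-- A differentiable function with monotone derivative lies above its tangent lines. -/
lemma tangent_le_of_monotone_deriv {f f' : ℝ → ℝ} (hf : ∀ u, HasDerivAt f (f' u) u)
    (hmono : Monotone f') (a t : ℝ) : f a + f' a * (t - a) ≤ f t := by
  have hc : Continuous f := continuous_iff_continuousAt.2 fun u => (hf u).continuousAt
  rcases lt_trichotomy a t with h | h | h
  · obtain ⟨c, hcm, hce⟩ := exists_hasDerivAt_eq_slope f f' h hc.continuousOn fun u _ => hf u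
    rw [eq_div_iff (by linarith)] at hce
    nlinarith [hmono hcm.1.le]
  · simp [h]
  · obtain ⟨c, hcm, hce⟩ := exists_hasDerivAt_eq_slope f f' h hc.continuousOn fun u _ => hf u
    rw [eq_div_iff (by linarith)] at hce
    nlinarith [hmono hcm.2.le]

lemma hasDerivAt_softplus (u : ℝ) :
    HasDerivAt (fun s => Real.log (1 + Real.exp s)) (Real.sigmoid u) u := by
  convert! ((Real.hasDerivAt_exp u).const_add 1).log (by positivity) using 1
  rw [Real.sigmoid_def, Real.exp_neg]
  field_simp
  ring

lemma softplus_tangent_le (a t : ℝ) :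
    Real.log (1 + Real.exp a) + Real.sigmoid a * (t - a) ≤ Real.log (1 + Real.exp t) :=
  tangent_le_of_monotone_deriv hasDerivAt_softplus Real.sigmoid_monotone a t

/-- The softplus function has second derivative at most `1/4`; equivalently, `u² / 8` minus
softplus is convex and lies above its tangents. -/
lemma softplus_le_quadratic (a t : ℝ) :
    Real.log (1 + Real.exp t) ≤
      Real.log (1 + Real.exp a) + Real.sigmoid a * (t - a) + (t - a) ^ 2 / 8 := by
  have hmono : Monotone fun u => u / 4 - Real.sigmoid u := by
    have hd (u : ℝ) : HasDerivAt (fun u => u / 4 - Real.sigmoid u)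
        (1 / 4 - Real.sigmoid u * (1 - Real.sigmoid u)) u :=
      ((hasDerivAt_id u).div_const 4).sub (Real.hasDerivAt_sigmoid u)
    refine monotone_of_deriv_nonneg (fun u => (hd u).differentiableAt) fun u => ?_
    rw [(hd u).deriv]
    nlinarith [sq_nonneg (Real.sigmoid u - 1 / 2)]
  have hd (u : ℝ) : HasDerivAt (fun u => u ^ 2 / 8 - Real.log (1 + Real.exp u))
      (u / 4 - Real.sigmoid u) u := by
    convert! ((hasDerivAt_pow 2 u).div_const 8).sub (hasDerivAt_softplus u) using 1
    push_cast
    ring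
  have := tangent_le_of_monotone_deriv hd hmono a t
  nlinarith

/-- Softplus of a square-integrable variable is integrable, since softplus grows at most
quadratically. -/
lemma integrable_softplus {Ω : Type*} {m0 : MeasurableSpace Ω} {μ : Measure Ω} [IsFiniteMeasure μ]
    {s : Ω → ℝ} (hs : MemLp s 2 μ) :
    Integrable (fun ω => Real.log (1 + Real.exp (s ω))) μ := by
  have hb : Integrable (fun ω => Real.log (1 + Real.exp 0) + Real.sigmoid 0 * (s ω - 0)
      + (s ω - 0) ^ 2 / 8) μ := by
    simp only [sub_zero]
    exact ((integrable_const _).add ((hs.integrable (by norm_num)).const_mul _)).add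
      (hs.integrable_sq.div_const 8)
  refine hb.mono' ?_ (.of_forall fun ω => ?_)
  · exact (Real.measurable_log.comp
      (measurable_const.add Real.measurable_exp)).comp_aemeasurable hs.1.aemeasurable
      |>.aestronglyMeasurable
  · rw [Real.norm_of_nonneg (Real.log_nonneg (by linarith [Real.exp_pos (s ω)]))]
    exact softplus_le_quadratic 0 (s ω)

/-- Under an integral against a function of the conditioning variable, `y` may be replaced by its
conditional expectation. -/
lemma integral_mul_eq_of_condExp {Ω : Type*} {m m0 : MeasurableSpace Ω} {μ : Measure Ω}
    [IsFiniteMeasure μ] (hm : m ≤ m0) {y p g : Ω → ℝ} (hy : Integrable y μ)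
    (hp : μ[y|m] =ᵐ[μ] p) (hg : StronglyMeasurable[m] g)
    (hyg : Integrable (fun ω => y ω * g ω) μ) :
    ∫ ω, y ω * g ω ∂μ = ∫ ω, p ω * g ω ∂μ := by
  rw [← integral_condExp hm]
  refine integral_congr_ae ?_
  filter_upwards [condExp_mul_of_stronglyMeasurable_right hg hyg hy, hp] with ω h1 h2
  exact h1.trans (by simp [h2])

/-- A variable with a centered Gaussian law is square integrable, with second moment the variance
parameter. -/
lemma memLp_and_integral_sq_of_map_gaussian {Ω : Type*} {m0 : MeasurableSpace Ω} {μ : Measure Ω}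
    {X : Ω → ℝ} (hX : Measurable X) {v : NNReal} (h : μ.map X = gaussianReal 0 v) :
    MemLp X 2 μ ∧ ∫ ω, X ω ^ 2 ∂μ = v := by
  constructor
  · have := memLp_id_gaussianReal' (μ := 0) (v := v) 2 (by norm_num)
    rw [← h] at this
    exact (memLp_map_measure_iff (by fun_prop) hX.aemeasurable).1 this
  · have h1 : ∫ u, u ^ 2 ∂(μ.map X) = ∫ ω, X ω ^ 2 ∂μ :=
      integral_map hX.aemeasurable (by fun_prop)
    rw [← h1, h, ← variance_fun_id_gaussianReal (μ := 0) (v := v),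
      variance_of_integral_eq_zero (by fun_prop) (by simp)]

/-- Excess logistic risk of LEACE under Gaussian features: for `Q` with `Qᵀ = I − P_z`,
`0 ≤ Δℓ(Q) ≤ (1/8) βᵀ P_z Σ P_z β`. -/
theorem excess_logistic_risk_leace_gaussian
    {Ω : Type*} [MeasureSpace Ω] [IsProbabilityMeasure (ℙ : Measure Ω)]
    {d : ℕ} (x : Ω → Fin d → ℝ) (hxm : Measurable x)
    (Sig : Matrix (Fin d) (Fin d) ℝ) (hSig : Sig.PosDef)
    (hgauss : ∀ a : Fin d → ℝ,
      Measure.map (fun ω => a ⬝ᵥ x ω) (ℙ : Measure Ω) =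
        gaussianReal 0 (Real.toNNReal (a ⬝ᵥ Sig.mulVec a)))
    (β : Fin d → ℝ)
    (σ : ℝ → ℝ) (hσ : σ = fun s => 1 / (1 + Real.exp (-s)))
    (y : Ω → ℝ) (hym : Measurable y) (hy01 : ∀ ω, y ω = 0 ∨ y ω = 1)
    (hmodel : (ℙ : Measure Ω)[y|MeasurableSpace.comap x inferInstance]
      =ᵐ[(ℙ : Measure Ω)] fun ω => σ (x ω ⬝ᵥ β))
    (ℓ : ℝ → ℝ → ℝ) (hℓ : ℓ = fun s u => Real.log (1 + Real.exp s) - u * s)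
    (Δℓ : Matrix (Fin d) (Fin d) ℝ → ℝ)
    (hΔℓ : Δℓ = fun Q => (∫ ω, ℓ (x ω ⬝ᵥ Qᵀ.mulVec β) (y ω)) - ∫ ω, ℓ (x ω ⬝ᵥ β) (y ω))
    (Pz : Matrix (Fin d) (Fin d) ℝ) (hPz1 : Pz * Pz = Pz) (hPz2 : Pz = Pzᵀ)
    (Q : Matrix (Fin d) (Fin d) ℝ) (hQ : Qᵀ = 1 - Pz) :
    0 ≤ Δℓ Q ∧ Δℓ Q ≤ (1 / 8) * (β ⬝ᵥ (Pz * Sig * Pz).mulVec β) := by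
  have hms : MeasurableSpace.comap x inferInstance ≤ (inferInstance : MeasurableSpace Ω) :=
    hxm.comap_le
  have hlin (a : Fin d → ℝ) : Measurable fun v : Fin d → ℝ => v ⬝ᵥ a := by
    unfold dotProduct; fun_prop
  have hmom (a : Fin d → ℝ) : MemLp (fun ω => x ω ⬝ᵥ a) 2 (ℙ : Measure Ω) ∧
      ∫ ω, (x ω ⬝ᵥ a) ^ 2 = a ⬝ᵥ Sig *ᵥ a := by
    have h := hgauss a
    simp only [dotProduct_comm a (x _)] at h
    have := memLp_and_integral_sq_of_map_gaussian ((hlin a).comp hxm) h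
    have h0 : 0 ≤ a ⬝ᵥ Sig *ᵥ a := by
      simpa using hSig.posSemidef.dotProduct_mulVec_nonneg a
    rwa [Real.coe_toNNReal _ h0] at this
  have hyb (ω : Ω) : ‖y ω‖ ≤ 1 := by rcases hy01 ω with h | h <;> simp [h]
  have hyi : Integrable y (ℙ : Measure Ω) :=
    (integrable_const (1 : ℝ)).mono' hym.aestronglyMeasurable (.of_forall hyb)
  have hpi : ∀ s, σ s = Real.sigmoid s := by
    intro s; simp [hσ, Real.sigmoid_def]
  have hlint (a : Fin d → ℝ) : Integrable (fun ω => x ω ⬝ᵥ a) (ℙ : Measure Ω) :=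
    (hmom a).1.integrable (by norm_num)
  have hyx (a : Fin d → ℝ) : Integrable (fun ω => y ω * (x ω ⬝ᵥ a)) (ℙ : Measure Ω) :=
    (hlint a).bdd_mul hym.aestronglyMeasurable (.of_forall hyb)
  set δ : Fin d → ℝ := Pz *ᵥ β with hδ
  have hQβ : Qᵀ *ᵥ β = β - δ := by rw [hQ, sub_mulVec, one_mulVec]
  have hsp (a : Fin d → ℝ) := integrable_softplus (hmom a).1
  have hpx : Integrable (fun ω => Real.sigmoid (x ω ⬝ᵥ β) * (x ω ⬝ᵥ δ)) (ℙ : Measure Ω) := by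
    refine (hlint δ).bdd_mul (c := 1)
      (continuous_sigmoid.measurable.comp ((hlin β).comp hxm)).aestronglyMeasurable
      (.of_forall fun ω => ?_)
    rw [Real.norm_of_nonneg (Real.sigmoid_nonneg _)]
    exact Real.sigmoid_le_one _
  have hcond : ∫ ω, y ω * (x ω ⬝ᵥ δ) = ∫ ω, Real.sigmoid (x ω ⬝ᵥ β) * (x ω ⬝ᵥ δ) := by
    simp only [hpi] at hmodel
    exact integral_mul_eq_of_condExp hms hyi hmodel
      ((hlin δ).comp (comap_measurable x)).stronglyMeasurable (hyx δ)
  have hD : Integrable (fun ω => Real.log (1 + Real.exp (x ω ⬝ᵥ (β - δ)))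
      - Real.log (1 + Real.exp (x ω ⬝ᵥ β))) (ℙ : Measure Ω) := (hsp _).sub (hsp _)
  have hL (a : Fin d → ℝ) : Integrable (fun ω => Real.log (1 + Real.exp (x ω ⬝ᵥ a))
      - y ω * (x ω ⬝ᵥ a)) (ℙ : Measure Ω) := (hsp a).sub (hyx a)
  have hkey : Δℓ Q = ∫ ω, (Real.log (1 + Real.exp (x ω ⬝ᵥ (β - δ)))
      - Real.log (1 + Real.exp (x ω ⬝ᵥ β)) + Real.sigmoid (x ω ⬝ᵥ β) * (x ω ⬝ᵥ δ)) := by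
    rw [integral_add hD hpx, ← hcond, ← integral_add hD (hyx δ), hΔℓ, hℓ]
    simp only [hQβ]
    rw [← integral_sub (hL _) (hL _)]
    refine integral_congr_ae (.of_forall fun ω => ?_)
    simp only [dotProduct_sub]
    ring
  rw [hkey]
  constructor
  · refine integral_nonneg fun ω => ?_
    have := softplus_tangent_le (x ω ⬝ᵥ β) (x ω ⬝ᵥ (β - δ))
    simp only [dotProduct_sub, Pi.zero_apply] at this ⊢
    linarith
  · have hquad : β ⬝ᵥ (Pz * Sig * Pz) *ᵥ β = δ ⬝ᵥ Sig *ᵥ δ := by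
      rw [← mulVec_mulVec, ← mulVec_mulVec, ← hδ, dotProduct_mulVec, ← mulVec_transpose, ← hPz2]
    rw [hquad, ← (hmom δ).2, ← integral_const_mul]
    refine integral_mono (hD.add hpx)
      ((hmom δ).1.integrable_sq.const_mul _) fun ω => ?_
    have := softplus_le_quadratic (x ω ⬝ᵥ β) (x ω ⬝ᵥ (β - δ))
    simp only [dotProduct_sub] at this ⊢
    nlinarith
end

section
/- Let x ∈ ℝ^d be a random vector with the standard multivariate Gaussian distribution N(0, I_d), and let y be a {0,1}-valued random variable with E[y | x] = σ(xᵀβ) almost surely, for a fixed β ∈ ℝ^d, where σ(s) := 1/(1 + e^{−s}). Let P ∈ ℝ^{d×d} be an orthogonal projection matrix (P² = P = Pᵀ) whose range contains the cross-covariance Σ_{x,y} := E[x y], i.e., P Σ_{x,y} = Σ_{x,y}. Then, taking Q with Qᵀ := P, the excess logistic risk vanishes: Δℓ(Q) := E[ℓ(xᵀPβ, y)] − E[ℓ(xᵀβ, y)] = 0. -/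
open MeasureTheory ProbabilityTheory Matrix

/-!
The point is that the hypotheses force `P β = β`, so the two risks are literally the same integral.

Write `v = β - P β`, `w = P β`. Since `P` fixes `Σ_{x,y}` and is symmetric, `v ⬝ Σ_{x,y} = 0`, and
pulling `v ⬝ x` through the conditional expectation turns this into `E[(v ⬝ x) σ(β ⬝ x)] = 0`.
Instead of computing this expectation with Stein's lemma, the proof uses that the law of `x` is
invariant under the reflection `R = 2P - 1` (`map_mulVec_eq_of_gaussian`), which fixes `w` and
negates `v`. Averaging over the reflection gives
`E[(v ⬝ x) (σ(w ⬝ x + v ⬝ x) - σ(w ⬝ x - v ⬝ x))] = 0`. As `σ` is strictly increasing, the integrand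
is nonnegative and vanishes only where `v ⬝ x = 0`; hence `v ⬝ x = 0` almost surely, so its variance
`v ⬝ v` is zero and `v = 0`.
-/

/-- The integrand left after averaging over the reflection is nonnegative, with equality only at
`t = 0`; in the application `t = v ⬝ x` and `c = w ⬝ x`. -/
lemma mul_sub_nonneg_of_strictMono {s : ℝ → ℝ} (hs : StrictMono s) (t c : ℝ) :
    0 ≤ t * (s (c + t) - s (c - t)) ∧ (t * (s (c + t) - s (c - t)) = 0 → t = 0) := by
  rcases lt_trichotomy t 0 with ht | rfl | ht
  · have h := mul_pos_of_neg_of_neg ht (sub_neg.2 (hs (show c + t < c - t by linarith)))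
    exact ⟨h.le, fun h0 => absurd h0 h.ne'⟩
  · simp
  · have h := mul_pos ht (sub_pos.2 (hs (show c - t < c + t by linarith)))
    exact ⟨h.le, fun h0 => absurd h0 h.ne'⟩

lemma logistic_strictMono : StrictMono (fun s : ℝ => 1 / (1 + Real.exp (-s))) := by
  intro a b hab
  have : Real.exp (-b) < Real.exp (-a) := Real.exp_lt_exp.2 (by linarith)
  exact one_div_lt_one_div_of_lt (by positivity) (by linarith)

lemma norm_logistic_le_one (s : ℝ) : ‖1 / (1 + Real.exp (-s))‖ ≤ 1 := by
  have := Real.exp_pos (-s)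
  rw [Real.norm_of_nonneg (by positivity), div_le_one (by positivity)]
  linarith

section Gaussian

variable {Ω : Type*} [MeasurableSpace Ω] {μ : Measure Ω} {d : ℕ} {x : Ω → Fin d → ℝ}

/-- Orthogonal invariance of the standard Gaussian law, which is given here through its
one-dimensional marginals; these determine the law by uniqueness of characteristic functions. -/
lemma map_mulVec_eq_of_gaussian [IsProbabilityMeasure μ] (hxm : Measurable x)
    (hgauss : ∀ a : Fin d → ℝ,
      Measure.map (fun ω => a ⬝ᵥ x ω) μ = gaussianReal 0 (Real.toNNReal (a ⬝ᵥ a)))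
    (R : Matrix (Fin d) (Fin d) ℝ) (hR : R * Rᵀ = 1) :
    Measure.map (fun ω => R *ᵥ x ω) μ = Measure.map x μ := by
  have hRm : Measurable (fun ω => R *ᵥ x ω) :=
    (Continuous.matrix_mulVec continuous_const continuous_id).measurable.comp hxm
  have := Measure.isProbabilityMeasure_map (μ := μ) hRm.aemeasurable
  have := Measure.isProbabilityMeasure_map (μ := μ) hxm.aemeasurable
  refine Measure.ext_of_charFunDual (funext fun L => ?_)
  rw [charFunDual_eq_charFun_map_one, charFunDual_eq_charFun_map_one,
    Measure.map_map (by fun_prop) hRm, Measure.map_map (by fun_prop) hxm]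
  set a : Fin d → ℝ := fun i => L (Pi.single i 1) with ha
  have hL : ∀ z, L z = a ⬝ᵥ z := by
    intro z
    conv_lhs => rw [pi_eq_sum_univ' z]
    simp [ha, dotProduct, mul_comm]
  have h1 : (L ∘ fun ω => R *ᵥ x ω) = fun ω => (a ᵥ* R) ⬝ᵥ x ω := by
    funext ω
    simp [hL, dotProduct_mulVec]
  have h2 : (L ∘ x) = fun ω => a ⬝ᵥ x ω := by
    funext ω
    simp [hL]
  have h3 : (a ᵥ* R) ⬝ᵥ (a ᵥ* R) = a ⬝ᵥ a := by
    rw [← dotProduct_mulVec, ← mulVec_transpose, mulVec_mulVec, hR, one_mulVec]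
  rw [h1, h2, hgauss, hgauss, h3]

lemma integrable_dotProduct_of_gaussian (hxm : Measurable x)
    (hgauss : ∀ a : Fin d → ℝ,
      Measure.map (fun ω => a ⬝ᵥ x ω) μ = gaussianReal 0 (Real.toNNReal (a ⬝ᵥ a)))
    (a : Fin d → ℝ) : Integrable (fun ω => a ⬝ᵥ x ω) μ := by
  have hm : Measurable (fun ω => a ⬝ᵥ x ω) := by
    simp only [dotProduct]; fun_prop
  have h : Integrable id (Measure.map (fun ω => a ⬝ᵥ x ω) μ) := by
    rw [hgauss]
    exact (memLp_id_gaussianReal 1).integrable (by simp)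
  exact h.comp_measurable hm

lemma eq_zero_of_gaussian_dotProduct_ae_eq_zero (hxm : Measurable x)
    (hgauss : ∀ a : Fin d → ℝ,
      Measure.map (fun ω => a ⬝ᵥ x ω) μ = gaussianReal 0 (Real.toNNReal (a ⬝ᵥ a)))
    {v : Fin d → ℝ} (hv : ∀ᵐ ω ∂μ, v ⬝ᵥ x ω = 0) : v = 0 := by
  have hm : Measurable (fun ω => v ⬝ᵥ x ω) := by
    simp only [dotProduct]; fun_prop
  by_contra hne
  have hpos : 0 < v ⬝ᵥ v :=
    lt_of_le_of_ne (Finset.sum_nonneg fun i _ => mul_self_nonneg (v i))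
      (fun h => hne (dotProduct_self_eq_zero.1 h.symm))
  -- a nondegenerate Gaussian law has no atoms, so it cannot be concentrated at `0`
  have := nullSingletonClass_gaussianReal (μ := 0) (v := Real.toNNReal (v ⬝ᵥ v))
    (Real.toNNReal_pos.2 hpos).ne'
  have h0 : ∀ᵐ t ∂(gaussianReal 0 (Real.toNNReal (v ⬝ᵥ v))), t = 0 := by
    rw [← hgauss]
    exact (ae_map_iff (p := fun t : ℝ => t = 0) hm.aemeasurable (measurableSet_singleton 0)).2 hv
  have h1 : ∀ᵐ t ∂(gaussianReal 0 (Real.toNNReal (v ⬝ᵥ v))), t ≠ 0 := by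
    rw [ae_iff]
    simp
  obtain ⟨t, ht0, ht1⟩ := (h0.and h1).exists
  exact ht1 ht0

/-- For an orthogonal projection `P`, if the residual feature `(β - P β) ⬝ x` is uncorrelated with
the bounded strictly increasing response `s (x ⬝ β)`, then `P` fixes `β`. Any such `s` works, since
only invariance of the law of `x` under the reflection `2P - 1` is used. -/
lemma mulVec_eq_of_integral_eq_zero [IsProbabilityMeasure μ] (hxm : Measurable x)
    (hgauss : ∀ a : Fin d → ℝ,
      Measure.map (fun ω => a ⬝ᵥ x ω) μ = gaussianReal 0 (Real.toNNReal (a ⬝ᵥ a)))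
    {s : ℝ → ℝ} (hs : StrictMono s) (hsb : ∀ t, ‖s t‖ ≤ 1)
    {P : Matrix (Fin d) (Fin d) ℝ} (hP1 : P * P = P) (hP2 : P = Pᵀ) {β : Fin d → ℝ}
    (h0 : ∫ ω, ((β - P *ᵥ β) ⬝ᵥ x ω) * s (x ω ⬝ᵥ β) ∂μ = 0) : P *ᵥ β = β := by
  have hsm : Measurable s := hs.monotone.measurable
  set v := β - P *ᵥ β with hv
  let R : Matrix (Fin d) (Fin d) ℝ := P + P - 1
  have hRt : Rᵀ = R := by simp [R, ← hP2]
  have hR : R * Rᵀ = 1 := by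
    rw [hRt]
    simp only [R, mul_sub, sub_mul, mul_add, add_mul, hP1, mul_one, one_mul]
    abel
  have hRβ : R *ᵥ β = P *ᵥ β - v := by
    simp only [R, sub_mulVec, add_mulVec, one_mulVec, hv]
    abel
  have hRP : R * P = P := by
    simp only [R, sub_mul, add_mul, hP1, one_mul]
    abel
  have hRv : R *ᵥ v = -v := by
    rw [hv, mulVec_sub, ← hv, hRβ, mulVec_mulVec, hRP, hv]
    abel
  have hself : ∀ a z : Fin d → ℝ, a ⬝ᵥ (R *ᵥ z) = (R *ᵥ a) ⬝ᵥ z := by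
    intro a z
    rw [dotProduct_mulVec, ← mulVec_transpose, hRt]
  have hdm : ∀ a : Fin d → ℝ, Measurable fun z : Fin d → ℝ => a ⬝ᵥ z := by
    intro a
    simp only [dotProduct]; fun_prop
  let f : (Fin d → ℝ) → ℝ := fun z => (v ⬝ᵥ z) * s (β ⬝ᵥ z)
  have hfm : Measurable f := (hdm v).mul (hsm.comp (hdm β))
  have hRm : Measurable (fun ω => R *ᵥ x ω) :=
    (Continuous.matrix_mulVec continuous_const continuous_id).measurable.comp hxm
  have hint : Integrable (fun ω => f (x ω)) μ :=
    (integrable_dotProduct_of_gaussian hxm hgauss v).mul_bdd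
      (hsm.comp ((hdm β).comp hxm)).aestronglyMeasurable (ae_of_all _ fun ω => hsb _)
  have hf0 : ∫ ω, f (x ω) ∂μ = 0 := by
    rw [← h0]
    simp only [f, dotProduct_comm β]
  have hmap := map_mulVec_eq_of_gaussian hxm hgauss R hR
  have hintR : Integrable (fun ω => f (R *ᵥ x ω)) μ := by
    have h : Integrable f (Measure.map x μ) :=
      (integrable_map_measure hfm.aestronglyMeasurable hxm.aemeasurable).2 hint
    rw [← hmap] at h
    exact h.comp_measurable hRm
  have hfR0 : ∫ ω, f (R *ᵥ x ω) ∂μ = 0 := by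
    rw [← hf0, ← integral_map hRm.aemeasurable hfm.aestronglyMeasurable, hmap,
      integral_map hxm.aemeasurable hfm.aestronglyMeasurable]
  have hsum : ∀ z, f z + f (R *ᵥ z) =
      (v ⬝ᵥ z) * (s ((P *ᵥ β) ⬝ᵥ z + v ⬝ᵥ z) - s ((P *ᵥ β) ⬝ᵥ z - v ⬝ᵥ z)) := by
    intro z
    have hβ : (P *ᵥ β) ⬝ᵥ z + v ⬝ᵥ z = β ⬝ᵥ z := by
      rw [← add_dotProduct, hv, add_sub_cancel]
    simp only [f, hself, hRβ, hRv, hβ, neg_dotProduct, sub_dotProduct (P *ᵥ β)]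
    ring
  have hsum0 : ∫ ω, (f (x ω) + f (R *ᵥ x ω)) ∂μ = 0 := by
    rw [integral_add hint hintR, hf0, hfR0, add_zero]
  have hae := (integral_eq_zero_iff_of_nonneg (fun ω => by
    simp only [Pi.zero_apply, Pi.add_apply, hsum]
    exact (mul_sub_nonneg_of_strictMono hs _ _).1) (hint.add hintR)).1 hsum0
  have hv0 : v = 0 := eq_zero_of_gaussian_dotProduct_ae_eq_zero hxm hgauss (by
    filter_upwards [hae] with ω hω
    simp only [Pi.zero_apply, Pi.add_apply, hsum] at hω
    exact (mul_sub_nonneg_of_strictMono hs _ _).2 hω)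
  exact (sub_eq_zero.1 hv0).symm

end Gaussian

/-- Vanishing excess logistic risk of SPLINCE under standard Gaussian features: if `P` is
an orthogonal projection with `P Σ_{x,y} = Σ_{x,y}` where `Σ_{x,y} = E[x y]`, then for
`Q` with `Qᵀ = P` the excess logistic risk is zero. -/
theorem excess_logistic_risk_splince_gaussian
    {Ω : Type*} [MeasureSpace Ω] [IsProbabilityMeasure (ℙ : Measure Ω)]
    {d : ℕ} (x : Ω → Fin d → ℝ) (hxm : Measurable x)
    (hgauss : ∀ a : Fin d → ℝ,
      Measure.map (fun ω => a ⬝ᵥ x ω) (ℙ : Measure Ω) =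
        gaussianReal 0 (Real.toNNReal (a ⬝ᵥ a)))
    (β : Fin d → ℝ)
    (σ : ℝ → ℝ) (hσ : σ = fun s => 1 / (1 + Real.exp (-s)))
    (y : Ω → ℝ) (hym : Measurable y) (hy01 : ∀ ω, y ω = 0 ∨ y ω = 1)
    (hmodel : (ℙ : Measure Ω)[y|MeasurableSpace.comap x inferInstance]
      =ᵐ[(ℙ : Measure Ω)] fun ω => σ (x ω ⬝ᵥ β))
    (Sxy : Fin d → ℝ) (hSxy : Sxy = fun i => ∫ ω, x ω i * y ω)
    (ℓ : ℝ → ℝ → ℝ) (hℓ : ℓ = fun s u => Real.log (1 + Real.exp s) - u * s)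
    (P : Matrix (Fin d) (Fin d) ℝ) (hP1 : P * P = P) (hP2 : P = Pᵀ)
    (hPrange : P.mulVec Sxy = Sxy) :
    (∫ ω, ℓ (x ω ⬝ᵥ P.mulVec β) (y ω)) - (∫ ω, ℓ (x ω ⬝ᵥ β) (y ω)) = 0 := by
  have hyb : ∀ ω, ‖y ω‖ ≤ 1 := fun ω => by rcases hy01 ω with h | h <;> simp [h]
  have hdint := integrable_dotProduct_of_gaussian hxm hgauss
  have hdy : ∀ a : Fin d → ℝ, Integrable (fun ω => (a ⬝ᵥ x ω) * y ω) := fun a =>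
    (hdint a).mul_bdd hym.aestronglyMeasurable (ae_of_all _ hyb)
  have hxy : ∀ i, Integrable (fun ω => x ω i * y ω) := fun i => by
    simpa using hdy (Pi.single i 1)
  have hyint : Integrable y :=
    Integrable.of_bound hym.aestronglyMeasurable 1 (ae_of_all _ hyb)
  have hcov : ∀ a : Fin d → ℝ, ∫ ω, (a ⬝ᵥ x ω) * y ω = a ⬝ᵥ Sxy := by
    intro a
    simp only [hSxy, dotProduct, Finset.sum_mul, mul_assoc]
    rw [integral_finsetSum _ fun i _ => (hxy i).const_mul (a i)]
    simp only [integral_const_mul]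
  have hres : (β - P *ᵥ β) ⬝ᵥ Sxy = 0 := by
    have : (P *ᵥ β) ⬝ᵥ Sxy = β ⬝ᵥ Sxy := by
      rw [hP2, mulVec_transpose, ← dotProduct_mulVec, hPrange]
    rw [sub_dotProduct, this, sub_self]
  have hpull : ∫ ω, ((β - P *ᵥ β) ⬝ᵥ x ω) * σ (x ω ⬝ᵥ β) = 0 := by
    rw [← hres, ← hcov, ← integral_condExp hxm.comap_le
      (f := fun ω => ((β - P *ᵥ β) ⬝ᵥ x ω) * y ω)]
    have hvm : StronglyMeasurable[MeasurableSpace.comap x inferInstance]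
        (fun ω => (β - P *ᵥ β) ⬝ᵥ x ω) := by
      have h : Measurable fun z : Fin d → ℝ => (β - P *ᵥ β) ⬝ᵥ z := by
        simp only [dotProduct]; fun_prop
      exact (h.comp (comap_measurable x)).stronglyMeasurable
    have hce := condExp_mul_of_stronglyMeasurable_left hvm (hdy (β - P *ᵥ β)) hyint
    refine integral_congr_ae ?_
    filter_upwards [hce, hmodel] with ω h1 h2
    rw [← h2]
    exact h1.symm
  have hPβ : P *ᵥ β = β := by
    subst hσ
    exact mulVec_eq_of_integral_eq_zero hxm hgauss logistic_strictMono norm_logistic_le_one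
      hP1 hP2 hpull
  rw [hPβ, sub_self]
end
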